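/- Let S ⊂ ℝ^k be a halfspace, A ∈ (APW^k_S)^{p×m}, B ∈ (APW^k_S)^{p×p} with B invertible in (APW^k)^{p×p}, γ > 0, and assume A and B are left coprime over APW^k_S. Let Λ' be any additive subgroup of ℝ^k containing σ(A) ∪ σ(B) (the union of the Bohr-Fourier spectra of all entries). If there exists F ∈ (APW^k_{S∩Λ'})^{m×p} with sup_{t∈ℝ^k} ‖F(t)‖ ≤ γ (operator norm) and A F = B, then the Toeplitz operators satisfy the inequality T(A)_{S,Λ'} (T(A)_{S,Λ'})* ≥ γ^{−2} · T(B)_{S,Λ'} (T(B)_{S,Λ'})* as self-adjoint operators on (B^k_{S∩Λ'})^{p×1}. -/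

import Mathlib

/- Almost periodic functions of `k` real variables, their Bohr-Fourier
coefficients and spectra, the Wiener algebra, and halfspaces. -/

open MeasureTheory Filter BoundedContinuousFunction

noncomputable section

/-- The Banach algebra of bounded continuous functions `ℝ^k → ℂ` (sup norm). -/
abbrev APB (k : ℕ) := BoundedContinuousFunction (Fin k → ℝ) ℂ

/-- The elementary exponential `e_λ(x) = e^{i⟨λ,x⟩}` as a bounded continuous function. -/
def apExp (k : ℕ) (lam : Fin k → ℝ) : APB k :=
  BoundedContinuousFunction.ofNormedAddCommGroup
    (fun x => Complex.exp (Complex.I * ((∑ j, lam j * x j : ℝ) : ℂ)))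
    (by fun_prop) 1
    (fun x => by
      simp [Complex.norm_exp, Complex.mul_re])

/-- `AP^k`: the closed subalgebra of `L^∞`-type bounded continuous functions
generated by all exponentials `e_λ`, `λ ∈ ℝ^k`. -/
def APalg (k : ℕ) : Subalgebra ℂ (APB k) :=
  (Algebra.adjoin ℂ (Set.range (apExp k))).topologicalClosure

/-- The Bohr-Fourier coefficient
`f_λ = lim_{T→∞} (2T)^{-k} ∫_{[-T,T]^k} e^{-i⟨λ,x⟩} f(x) dx`. -/
def bohrCoeff (k : ℕ) (f : (Fin k → ℝ) → ℂ) (lam : Fin k → ℝ) : ℂ :=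
  limUnder atTop (fun T : ℝ =>
    (((2 * T) ^ k : ℝ) : ℂ)⁻¹ *
      ∫ x in Set.Icc (fun _ => -T : Fin k → ℝ) (fun _ => T),
        Complex.exp (-(Complex.I * ((∑ j, lam j * x j : ℝ) : ℂ))) * f x)

/-- The Bohr-Fourier spectrum `σ(f) = {λ : f_λ ≠ 0}`. -/
def bohrSpectrum (k : ℕ) (f : (Fin k → ℝ) → ℂ) : Set (Fin k → ℝ) :=
  {lam | bohrCoeff k f lam ≠ 0}

/-- Membership in `AP^k_Δ = {f ∈ AP^k : σ(f) ⊆ Δ}`. -/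
def APmem (k : ℕ) (Δ : Set (Fin k → ℝ)) (f : APB k) : Prop :=
  f ∈ APalg k ∧ bohrSpectrum k ⇑f ⊆ Δ

/-- Membership in the Wiener algebra `APW^k_Δ`: almost periodic with spectrum
in `Δ` and absolutely convergent Bohr-Fourier series. -/
def APWmem (k : ℕ) (Δ : Set (Fin k → ℝ)) (f : APB k) : Prop :=
  APmem k Δ f ∧ Summable (fun lam => ‖bohrCoeff k (⇑f) lam‖)

/-- The Wiener norm `‖f‖_W = ∑_λ |f_λ|`. -/
def wienerNorm (k : ℕ) (f : (Fin k → ℝ) → ℂ) : ℝ :=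
  ∑' lam, ‖bohrCoeff k f lam‖

/-- A halfspace `S ⊂ ℝ^k`: `ℝ^k = S ∪ (-S)`, `S ∩ (-S) = {0}`, and `S` is
closed under addition and under multiplication by nonnegative reals. -/
structure IsHalfspace (k : ℕ) (S : Set (Fin k → ℝ)) : Prop where
  union : S ∪ -S = Set.univ
  inter : S ∩ -S = {0}
  add_mem : ∀ x ∈ S, ∀ y ∈ S, x + y ∈ S
  smul_mem : ∀ x ∈ S, ∀ a : ℝ, 0 ≤ a → a • x ∈ S

/- The Besicovitch space and Toeplitz operators.  The Besicovitch space `B^k`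
is the Hilbert-space completion of `AP^k` in the inner product `⟨f,g⟩=M{f·ḡ}`;
the exponentials `e_λ` form an orthonormal basis, so `(B^k_Λ)^{n×1}` is
canonically identified (via Bohr-Fourier coefficients) with `ℓ²(Fin n × Λ)`. -/

/-- The column Besicovitch space `(B^k_Λ)^{n×1} ≅ ℓ²(Fin n × Λ)`. -/
abbrev BesCol (k n : ℕ) (Λ : Set (Fin k → ℝ)) : Type :=
  lp (fun _ : Fin n × ↥Λ => ℂ) 2

/-- `T` is the Toeplitz operator
`T(F)_{S,Λ} : (B^k_{S∩Λ})^{n×1} → (B^k_{S∩Λ})^{m×1}`, `φ ↦ Π_{S∩Λ}(Fφ)`,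
characterized by its matrix with respect to the orthonormal basis of
exponentials: `⟪e_ν δ_i , T(e_μ δ_j)⟫ = (F i j)_{ν-μ}` (Bohr-Fourier
coefficient of the `(i,j)` entry at `ν - μ`). -/
def RepresentsToeplitz (k : ℕ) (S Λ : Set (Fin k → ℝ)) (m n : ℕ)
    (F : Matrix (Fin m) (Fin n) (APB k))
    (T : BesCol k n (S ∩ Λ) →L[ℂ] BesCol k m (S ∩ Λ)) : Prop :=
  ∀ (j : Fin n) (μ : ↥(S ∩ Λ)) (i : Fin m) (ν : ↥(S ∩ Λ)),
    (inner ℂ (lp.single 2 (i, ν) (1 : ℂ)) (T (lp.single 2 (j, μ) (1 : ℂ))) : ℂ) =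
      bohrCoeff k (⇑(F i j)) ((ν : Fin k → ℝ) - (μ : Fin k → ℝ))

/-- Invertibility of a continuous linear map. -/
def CLMInvertible {E F : Type*} [NormedAddCommGroup E] [NormedAddCommGroup F]
    [NormedSpace ℂ E] [NormedSpace ℂ F] (T : E →L[ℂ] F) : Prop :=
  ∃ Tinv : F →L[ℂ] E,
    Tinv.comp T = ContinuousLinearMap.id ℂ E ∧ T.comp Tinv = ContinuousLinearMap.id ℂ F

/-- `sup_{t ∈ ℝ^k} ‖F(t)‖ ≤ γ`, where `‖·‖` is the operator norm of a matrix
with respect to Euclidean vector norms. -/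
def MatrixSupOpNormLE (k m n : ℕ) (F : Matrix (Fin m) (Fin n) (APB k))
    (γ : ℝ) : Prop :=
  ∀ (t : Fin k → ℝ) (v : Fin n → ℂ),
    Real.sqrt (∑ i, ‖∑ j, F i j t * v j‖ ^ 2) ≤
      γ * Real.sqrt (∑ j, ‖v j‖ ^ 2)

/- The Bohr mean `M` is positive, so the GNS construction realises functions as multiplication
operators on the Besicovitch space, and `F ↦ M_F` is multiplicative on matrices with
`‖M_F‖ ≤ sup_t ‖F(t)‖`. The Toeplitz operator of `F` is the compression of `M_F` to the functions
with spectrum in `S ∩ Λ'`. As `S ∩ Λ'` is closed under addition, multiplication by a matrix with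
spectrum in `S ∩ Λ'` leaves these functions invariant, hence `T(B) = T(A F) = T(A) T(F)` with
`‖T(F)‖ ≤ γ`, and `T(A) T(A)* - γ⁻² T(B) T(B)* = T(A) (1 - γ⁻² T(F) T(F)*) T(A)* ≥ 0`. -/

section Order

open scoped ComplexOrder

variable {X : Type*} [TopologicalSpace X]

/-- The pointwise order on bounded continuous functions, `ℂ` being ordered by `z ≤ w` iff `w - z`
is real and nonnegative. -/
instance boundedContinuousPartialOrder : PartialOrder (X →ᵇ ℂ) :=
  PartialOrder.lift (⇑) DFunLike.coe_injective

instance boundedContinuousStarOrderedRing : StarOrderedRing (X →ᵇ ℂ) :=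
  .of_nonneg_iff' (fun hfg h x => add_le_add_right (hfg x) (h x)) fun f => by
    refine ⟨fun hf => ?_, ?_⟩
    · have hbound : ∀ x, ‖((√(f x).re : ℝ) : ℂ)‖ ≤ √‖f‖ := fun x => by
        rw [Complex.norm_real, Real.norm_of_nonneg (Real.sqrt_nonneg _)]
        exact Real.sqrt_le_sqrt ((Complex.re_le_norm _).trans (f.norm_coe_le_norm x))
      refine ⟨.ofNormedAddCommGroup (fun x => ((√(f x).re : ℝ) : ℂ)) (by fun_prop) _ hbound, ?_⟩
      ext x
      obtain ⟨r, hr, hrx⟩ := RCLike.nonneg_iff_exists_ofReal.1 (hf x)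
      simp only [BoundedContinuousFunction.coe_mul, Pi.mul_apply,
        BoundedContinuousFunction.star_apply, coe_ofNormedAddCommGroup, Complex.star_def,
        Complex.conj_ofReal, ← Complex.ofReal_mul]
      rw [← hrx]
      simp [Real.mul_self_sqrt hr]
    · rintro ⟨s, rfl⟩ x
      exact star_mul_self_nonneg (s x)

end Order

section Limit

open scoped ComplexOrder

theorem exists_tendsto_positiveLinearMap {ι E : Type*} [AddCommGroup E] [PartialOrder E]
    [IsOrderedAddMonoid E] [Module ℂ E] (U : Ultrafilter ι) (φ : ι → E →ₚ[ℂ] ℂ)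
    (hφ : ∀ a, ∃ C, ∀ i, ‖φ i a‖ ≤ C) :
    ∃ ψ : E →ₚ[ℂ] ℂ, ∀ a, Tendsto (fun i => φ i a) U (nhds (ψ a)) := by
  have hlim : ∀ a, ∃ z, Tendsto (fun i => φ i a) U (nhds z) := fun a => by
    obtain ⟨C, hC⟩ := hφ a
    obtain ⟨z, -, hz⟩ := (isCompact_closedBall (0 : ℂ) C).ultrafilter_le_nhds
      (U.map fun i => φ i a) <| le_principal_iff.2 <| Filter.mem_map.2 <|
        Eventually.of_forall fun i => mem_closedBall_zero_iff.2 (hC i)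
    exact ⟨z, hz⟩
  choose ψ hψ using hlim
  let ψₗ : E →ₗ[ℂ] ℂ :=
    { toFun := ψ
      map_add' a b := tendsto_nhds_unique (hψ (a + b)) <| by
        simpa only [map_add] using (hψ a).add (hψ b)
      map_smul' c a := tendsto_nhds_unique (hψ (c • a)) <| by
        simpa only [map_smul, RingHom.id_apply] using (hψ a).const_smul c }
  exact ⟨.mk₀ ψₗ fun a ha => ge_of_tendsto' (hψ a) fun i => map_nonneg (φ i) ha, hψ⟩

end Limit

section Integral

open scoped ComplexOrder

variable {X : Type*} [TopologicalSpace X] [MeasurableSpace X] [OpensMeasurableSpace X]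

/-- Integration against a finite measure as a positive linear functional on the C⋆-algebra of
bounded continuous functions. -/
def integralFunctional (μ : Measure X) [IsFiniteMeasure μ] : (X →ᵇ ℂ) →ₚ[ℂ] ℂ :=
  .mk₀
    { toFun f := ∫ x, f x ∂μ
      map_add' f g := integral_add (f.integrable μ) (g.integrable μ)
      map_smul' c f := integral_const_mul c f }
    fun _ hf => integral_nonneg hf

theorem norm_integralFunctional_le (μ : Measure X) [IsZeroOrProbabilityMeasure μ] (f : X →ᵇ ℂ) :
    ‖integralFunctional μ f‖ ≤ ‖f‖ :=
  (f.norm_integral_le_mul_norm μ).trans <|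
    mul_le_of_le_one_left (norm_nonneg f) measureReal_le_one

end Integral

section BohrMean

open scoped ComplexOrder

/-- The cube `[-T, T]^k` over which Bohr means are taken; it is empty for `T < 0 < k`. -/
def cube (k : ℕ) (T : ℝ) : Set (Fin k → ℝ) :=
  Set.Icc (fun _ => -T) fun _ => T

/-- The average over `[-T, T]^k`, as a positive functional. Averaging against the conditional
measure gives the zero functional when the cube is null, so every `cubeMean k T` is contractive. -/
def cubeMean (k : ℕ) (T : ℝ) : APB k →ₚ[ℂ] ℂ :=
  integralFunctional (ProbabilityTheory.cond volume (cube k T))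

theorem cubeMean_apply {k : ℕ} {T : ℝ} (hT : 0 ≤ T) (f : APB k) :
    cubeMean k T f = (((2 * T) ^ k : ℝ) : ℂ)⁻¹ *
      ∫ x in Set.Icc (fun _ => -T : Fin k → ℝ) (fun _ => T), f x := by
  have hvol : (volume (cube k T)).toReal = (2 * T) ^ k := by
    rw [cube, Real.volume_Icc_pi_toReal fun _ => neg_le_self hT]
    simp [two_mul]
  rw [← hvol, ← Complex.ofReal_inv, ← ENNReal.toReal_inv, ← Complex.real_smul]
  exact integral_smul_measure _ _

theorem norm_cubeMean_le {k : ℕ} (T : ℝ) (f : APB k) : ‖cubeMean k T f‖ ≤ ‖f‖ :=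
  norm_integralFunctional_le _ f

theorem exists_bohrMean (k : ℕ) : ∃ φ : APB k →ₚ[ℂ] ℂ, ∀ f,
    Tendsto (fun T => cubeMean k T f) (Ultrafilter.of (atTop : Filter ℝ)) (nhds (φ f)) :=
  exists_tendsto_positiveLinearMap _ _ fun f => ⟨‖f‖, fun T => norm_cubeMean_le T f⟩

/-- A positive functional extending the Bohr mean `M{f}` from `AP^k` to all bounded continuous
functions: the limit of the cube averages along a fixed ultrafilter refining `atTop`. Defining it on
all of `APB k` makes the GNS construction of a C⋆-algebra available. -/
def bohrMean (k : ℕ) : APB k →ₚ[ℂ] ℂ :=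
  (exists_bohrMean k).choose

theorem bohrMean_eq_of_tendsto {k : ℕ} {f : APB k} {a : ℂ}
    (h : Tendsto (fun T => cubeMean k T f) atTop (nhds a)) : bohrMean k f = a :=
  tendsto_nhds_unique ((exists_bohrMean k).choose_spec f) (h.mono_left (Ultrafilter.of_le _))

theorem apExp_apply {k : ℕ} (lam x : Fin k → ℝ) :
    apExp k lam x = Complex.exp (Complex.I * ((∑ j, lam j * x j : ℝ) : ℂ)) := rfl

theorem apExp_zero (k : ℕ) : apExp k 0 = 1 := by
  ext x; simp [apExp_apply]

theorem apExp_mul {k : ℕ} (a b : Fin k → ℝ) : apExp k a * apExp k b = apExp k (a + b) := by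
  ext x
  simp only [BoundedContinuousFunction.coe_mul, Pi.mul_apply, apExp_apply, ← Complex.exp_add,
    Pi.add_apply, add_mul, Finset.sum_add_distrib, Complex.ofReal_add, mul_add]

theorem star_apExp {k : ℕ} (a : Fin k → ℝ) : star (apExp k a) = apExp k (-a) := by
  ext x
  rw [BoundedContinuousFunction.star_apply, apExp_apply, apExp_apply, Complex.star_def,
    ← Complex.exp_conj]
  simp

theorem tendsto_interval_average_exp (c : ℝ) :
    Tendsto (fun T : ℝ => ((2 * T : ℝ) : ℂ)⁻¹ *
      ∫ x in Set.Icc (-T) T, Complex.exp (Complex.I * ((c * x : ℝ) : ℂ))) atTop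
      (nhds (if c = 0 then 1 else 0)) := by
  split_ifs with hc
  · refine tendsto_const_nhds.congr' ?_
    filter_upwards [eventually_gt_atTop 0] with T hT
    have hT' : ((2 * T : ℝ) : ℂ) ≠ 0 := by exact_mod_cast (mul_pos two_pos hT).ne'
    simpa [hc, Real.volume_real_Icc_of_le (neg_le_self hT.le), ← two_mul] using
      (inv_mul_cancel₀ hT').symm
  · have hlim : Tendsto (fun T : ℝ => (2 * T)⁻¹ * (2 / |c|)) atTop (nhds 0) := by
      simpa using (tendsto_inv_atTop_zero.comp
        (tendsto_id.const_mul_atTop (zero_lt_two (α := ℝ)))).mul_const (2 / |c|)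
    refine squeeze_zero_norm' ?_ hlim
    filter_upwards [eventually_gt_atTop 0] with T hT
    have hexp : ∀ y : ℝ, ‖Complex.exp (Complex.I * c * y)‖ = 1 := fun y => by
      simp [Complex.norm_exp]
    have hint : ‖∫ x in (-T)..T, Complex.exp (Complex.I * c * x)‖ ≤ 2 / |c| := by
      rw [integral_exp_mul_complex (by simp [hc]), norm_div]
      have hden : ‖Complex.I * (c : ℂ)‖ = |c| := by simp
      rw [hden]
      gcongr
      exact (norm_sub_le _ _).trans_eq (by rw [hexp, hexp, one_add_one_eq_two])
    rw [norm_mul, norm_inv, Complex.norm_real, Real.norm_of_nonneg (by positivity),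
      integral_Icc_eq_integral_Ioc, ← intervalIntegral.integral_of_le (by linarith)]
    simp only [Complex.ofReal_mul, ← mul_assoc]
    gcongr

theorem cubeMean_apExp {k : ℕ} (lam : Fin k → ℝ) {T : ℝ} (hT : 0 ≤ T) :
    cubeMean k T (apExp k lam) = ∏ j, (((2 * T : ℝ) : ℂ)⁻¹ *
      ∫ x in Set.Icc (-T) T, Complex.exp (Complex.I * ((lam j * x : ℝ) : ℂ))) := by
  have hprod := integral_fintype_prod_eq_prod (𝕜 := ℂ) (ι := Fin k) (E := fun _ => ℝ)
    (μ := fun _ => volume.restrict (Set.Icc (-T) T))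
    (fun j x => Complex.exp (Complex.I * ((lam j * x : ℝ) : ℂ)))
  rw [← Measure.restrict_pi_pi, ← volume_pi, Set.pi_univ_Icc] at hprod
  rw [cubeMean_apply hT, Finset.prod_mul_distrib, ← hprod]
  simp only [apExp_apply, ← Complex.exp_sum, Complex.ofReal_sum, Finset.mul_sum]
  simp [-mul_inv_rev]

theorem tendsto_cubeMean_apExp {k : ℕ} (lam : Fin k → ℝ) :
    Tendsto (fun T => cubeMean k T (apExp k lam)) atTop (nhds (if lam = 0 then 1 else 0)) := by
  have hprod := tendsto_finsetProd (Finset.univ : Finset (Fin k))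
    fun j _ => tendsto_interval_average_exp (lam j)
  have hlim : ∏ j, (if lam j = 0 then (1 : ℂ) else 0) = if lam = 0 then 1 else 0 := by
    simp [Finset.prod_ite_zero, funext_iff]
  rw [hlim] at hprod
  refine hprod.congr' ?_
  filter_upwards [eventually_ge_atTop 0] with T hT using (cubeMean_apExp lam hT).symm

theorem bohrMean_apExp {k : ℕ} (lam : Fin k → ℝ) :
    bohrMean k (apExp k lam) = if lam = 0 then 1 else 0 :=
  bohrMean_eq_of_tendsto (tendsto_cubeMean_apExp lam)

theorem apExp_mem_APalg {k : ℕ} (lam : Fin k → ℝ) : apExp k lam ∈ APalg k :=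
  Subalgebra.le_topologicalClosure _ (Algebra.subset_adjoin ⟨lam, rfl⟩)

theorem toSubmodule_APalg (k : ℕ) :
    (APalg k).toSubmodule = (Submodule.span ℂ (Set.range (apExp k))).topologicalClosure := by
  have hclosure : (Submonoid.closure (Set.range (apExp k)) : Set (APB k)) =
      Set.range (apExp k) := by
    let exps : Submonoid (APB k) :=
      { carrier := Set.range (apExp k)
        one_mem' := ⟨0, apExp_zero k⟩
        mul_mem' := by
          rintro _ _ ⟨a, rfl⟩ ⟨b, rfl⟩
          exact ⟨a + b, (apExp_mul a b).symm⟩ }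
    exact congrArg _ exps.closure_eq
  rw [← hclosure, ← Algebra.adjoin_eq_span]
  rfl

theorem tendsto_cubeMean {k : ℕ} {f : APB k} (hf : f ∈ APalg k) :
    Tendsto (fun T => cubeMean k T f) atTop (nhds (bohrMean k f)) := by
  -- Each ultrafilter limit of the cube means is a positive, hence continuous, functional, so it is
  -- determined on `AP^k` by its values on exponentials.
  refine (tendsto_iff_ultrafilter _ _ _).2 fun U hU => ?_
  obtain ⟨ψ, hψ⟩ := exists_tendsto_positiveLinearMap U (cubeMean k) fun f =>
    ⟨‖f‖, fun T => norm_cubeMean_le T f⟩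
  have hexp : Set.EqOn (⟨ψ.toLinearMap, map_continuous ψ⟩ : APB k →L[ℂ] ℂ)
      (⟨(bohrMean k).toLinearMap, map_continuous (bohrMean k)⟩ : APB k →L[ℂ] ℂ)
      (Set.range (apExp k)) := by
    rintro _ ⟨lam, rfl⟩
    exact (tendsto_nhds_unique (hψ _) ((tendsto_cubeMean_apExp lam).mono_left hU)).trans
      (bohrMean_apExp lam).symm
  have hf' : f ∈ closure (Submodule.span ℂ (Set.range (apExp k)) : Set (APB k)) := by
    rwa [← Submodule.topologicalClosure_coe, ← toSubmodule_APalg]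
  have heq : ψ f = bohrMean k f := ContinuousLinearMap.eqOn_closure_span hexp hf'
  exact heq ▸ hψ f

theorem bohrCoeff_eq_bohrMean {k : ℕ} {f : APB k} (hf : f ∈ APalg k) (lam : Fin k → ℝ) :
    bohrCoeff k f lam = bohrMean k (star (apExp k lam) * f) := by
  rw [star_apExp]
  have h := tendsto_cubeMean ((APalg k).mul_mem (apExp_mem_APalg (-lam)) hf)
  refine (h.congr' ?_).limUnder_eq
  filter_upwards [eventually_ge_atTop 0] with T hT
  rw [cubeMean_apply hT]
  simp [apExp_apply]

end BohrMean

section Gns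

open scoped ComplexOrder InnerProductSpace Matrix

variable {A : Type*} [CStarAlgebra A] [PartialOrder A] [StarOrderedRing A] (φ : A →ₚ[ℂ] ℂ)
  {ι κ τ H : Type*} [Fintype κ] [Fintype τ] [NormedAddCommGroup H] [InnerProductSpace ℂ H]

/-- The class of `a` in the GNS space of `φ`. For `φ` the Bohr mean this sends a function to its
class in the Besicovitch space. -/
def gnsVector : A →L[ℂ] φ.GNS where
  toLinearMap := UniformSpace.Completion.toComplL.toLinearMap ∘ₗ φ.toPreGNS.toLinearMap
  cont := by
    have heval : Continuous fun a => φ.gnsStarAlgHom a (φ.toPreGNS 1) :=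
      (map_continuous φ.gnsStarAlgHom).clm_apply continuous_const
    refine heval.congr fun a => ?_
    simp

theorem gnsStarAlgHom_gnsVector (a b : A) :
    φ.gnsStarAlgHom a (gnsVector φ b) = gnsVector φ (a * b) := by
  simp [gnsVector]

theorem inner_gnsVector (a b : A) : ⟪gnsVector φ a, gnsVector φ b⟫_ℂ = φ (star a * b) :=
  UniformSpace.Completion.inner_coe _ _

theorem denseRange_gnsVector : DenseRange (gnsVector φ) := by
  have hcoe : ⇑(gnsVector φ) = UniformSpace.Completion.coe' ∘ φ.toPreGNS := rfl
  rw [DenseRange, hcoe, φ.toPreGNS.surjective.range_comp]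
  exact UniformSpace.Completion.denseRange_coe

/-- The operator between `ℓ²` sums of copies of `H` given by a matrix of operators on `H`. -/
def operatorMatrix (T : Matrix ι κ (H →L[ℂ] H)) :
    PiLp 2 (fun _ : κ => H) →L[ℂ] PiLp 2 (fun _ : ι => H) :=
  (PiLp.continuousLinearEquiv 2 ℂ fun _ : ι => H).symm ∘L
    .pi fun i => ∑ j, T i j ∘L PiLp.proj 2 (fun _ : κ => H) j

theorem operatorMatrix_apply (T : Matrix ι κ (H →L[ℂ] H)) (x : PiLp 2 fun _ : κ => H) (i : ι) :
    operatorMatrix T x i = ∑ j, T i j (x j) := by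
  simp [operatorMatrix]

theorem operatorMatrix_mul (S : Matrix ι κ (H →L[ℂ] H)) (T : Matrix κ τ (H →L[ℂ] H)) :
    operatorMatrix (S * T) = operatorMatrix S ∘L operatorMatrix T := by
  ext x i
  simp only [operatorMatrix_apply, Matrix.mul_apply, ContinuousLinearMap.comp_apply, map_sum,
    _root_.sum_apply, mul_apply_eq_comp]
  exact Finset.sum_comm

/-- The operator of left multiplication by a matrix over `A` on columns over the GNS space. -/
def gnsMatrix (F : Matrix ι κ A) : PiLp 2 (fun _ : κ => φ.GNS) →L[ℂ] PiLp 2 (fun _ : ι => φ.GNS) :=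
  operatorMatrix (F.map φ.gnsStarAlgHom)

theorem gnsMatrix_mul (F : Matrix ι κ A) (G : Matrix κ τ A) :
    gnsMatrix φ (F * G) = gnsMatrix φ F ∘L gnsMatrix φ G := by
  rw [gnsMatrix, Matrix.map_mul, operatorMatrix_mul]
  rfl

/-- The column of GNS vectors of a column over `A`. -/
def gnsColumn (y : ι → A) : PiLp 2 (fun _ : ι => φ.GNS) :=
  WithLp.toLp 2 fun i => gnsVector φ (y i)

theorem gnsMatrix_gnsColumn (F : Matrix ι κ A) (y : κ → A) :
    gnsMatrix φ F (gnsColumn φ y) = gnsColumn φ (F *ᵥ y) := by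
  ext i
  simp [gnsMatrix, gnsColumn, operatorMatrix_apply, Matrix.mulVec, dotProduct,
    gnsStarAlgHom_gnsVector, -PositiveLinearMap.gnsStarAlgHom_apply]

theorem norm_gnsColumn_sq (y : κ → A) : (‖gnsColumn φ y‖ ^ 2 : ℂ) = φ (star y ⬝ᵥ y) := by
  refine (inner_self_eq_norm_sq_to_K (𝕜 := ℂ) (gnsColumn φ y)).symm.trans ?_
  rw [PiLp.inner_apply]
  simp only [gnsColumn, inner_gnsVector, dotProduct, map_sum, Pi.star_apply]

theorem denseRange_gnsColumn : DenseRange (gnsColumn φ : (ι → A) → PiLp 2 fun _ : ι => φ.GNS) :=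
  (PiLp.continuousLinearEquiv 2 ℂ _).symm.surjective.denseRange.comp
    (DenseRange.piMap fun _ => denseRange_gnsVector φ)
    (PiLp.continuousLinearEquiv 2 ℂ _).symm.continuous

theorem norm_gnsMatrix_le [Fintype ι] {F : Matrix ι κ A} {γ : ℝ} (hγ : 0 ≤ γ)
    (hF : ∀ y : κ → A, star (F *ᵥ y) ⬝ᵥ (F *ᵥ y) ≤ γ ^ 2 • (star y ⬝ᵥ y)) :
    ‖gnsMatrix φ F‖ ≤ γ := by
  refine ContinuousLinearMap.opNorm_le_bound _ hγ fun x => ?_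
  refine (denseRange_gnsColumn φ).induction_on x
    (isClosed_le (by fun_prop) (by fun_prop)) fun y => ?_
  rw [gnsMatrix_gnsColumn, ← sq_le_sq₀ (norm_nonneg _) (by positivity), mul_pow,
    ← Complex.real_le_real]
  push_cast
  rw [norm_gnsColumn_sq, norm_gnsColumn_sq]
  refine (OrderHomClass.mono φ (hF y)).trans_eq ?_
  rw [← Complex.coe_smul, map_smul, smul_eq_mul, Complex.ofReal_pow]

end Gns

section Hilbert

open scoped ComplexOrder InnerProductSpace InnerProduct

variable {ι κ E F G : Type*} [NormedAddCommGroup E] [InnerProductSpace ℂ E]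
  [NormedAddCommGroup F] [InnerProductSpace ℂ F] [NormedAddCommGroup G] [InnerProductSpace ℂ G]

theorem mem_orthogonal_closure_span {s : Set E} {y : E} (hy : ∀ x ∈ s, ⟪x, y⟫_ℂ = 0) :
    y ∈ (Submodule.span ℂ s).topologicalClosureᗮ := by
  rw [Submodule.orthogonal_closure, Submodule.mem_orthogonal]
  have hle : Submodule.span ℂ s ≤ (ℂ ∙ y)ᗮ :=
    Submodule.span_le.2 fun x hx => Submodule.mem_orthogonal_singleton_iff_inner_left.2 (hy x hx)
  exact fun x hx => Submodule.mem_orthogonal_singleton_iff_inner_left.1 (hle hx)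

theorem mem_closure_span_image_of_inner_eq_zero [CompleteSpace E] {v : ι → E}
    (hv : Orthonormal ℂ v) {s : Set ι} {x : E}
    (hx : x ∈ (Submodule.span ℂ (Set.range v)).topologicalClosure)
    (hxs : ∀ i ∉ s, ⟪v i, x⟫_ℂ = 0) :
    x ∈ (Submodule.span ℂ (v '' s)).topologicalClosure := by
  set L := (Submodule.span ℂ (Set.range v)).topologicalClosure
  set K := (Submodule.span ℂ (v '' s)).topologicalClosure
  have hKL : K ≤ L :=
    Submodule.topologicalClosure_mono (Submodule.span_mono (Set.image_subset_range v s))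
  have hres : ∀ i, ⟪v i, x - K.starProjection x⟫_ℂ = 0 := fun i => by
    by_cases hi : i ∈ s
    · exact Submodule.inner_right_of_mem_orthogonal
        (Submodule.le_topologicalClosure _ (Submodule.subset_span (Set.mem_image_of_mem v hi)))
        (K.sub_starProjection_mem_orthogonal x)
    · have hvi : v i ∈ Kᗮ := mem_orthogonal_closure_span <| by
        rintro _ ⟨j, hj, rfl⟩
        exact hv.inner_eq_zero (ne_of_mem_of_not_mem hj hi)
      rw [inner_sub_right, hxs i hi, zero_sub, neg_eq_zero]
      exact Submodule.inner_left_of_mem_orthogonal (K.starProjection_apply_mem x) hvi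
  have hres_mem : x - K.starProjection x ∈ L :=
    L.sub_mem hx (hKL (K.starProjection_apply_mem x))
  have hres_orthogonal : x - K.starProjection x ∈ Lᗮ :=
    mem_orthogonal_closure_span (Set.forall_mem_range.2 hres)
  have hres_zero := Submodule.disjoint_def.1 L.orthogonal_disjoint _ hres_mem hres_orthogonal
  exact sub_eq_zero.1 hres_zero ▸ K.starProjection_apply_mem x

theorem isPositive_one_sub_comp_adjoint [CompleteSpace E] [CompleteSpace F] {C : E →L[ℂ] F}
    {γ : ℝ} (hγ : 0 < γ) (hC : ‖C‖ ≤ γ) : (1 - ((γ : ℂ) ^ 2)⁻¹ • C ∘L C†).IsPositive := by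
  rw [← Complex.ofReal_pow, ← Complex.ofReal_inv]
  have hsa : IsSelfAdjoint (C ∘L C†) :=
    (ContinuousLinearMap.isPositive_self_comp_adjoint C).isSelfAdjoint
  have hγsa : IsSelfAdjoint (((γ ^ 2)⁻¹ : ℝ) : ℂ) := Complex.conj_ofReal _
  refine ContinuousLinearMap.isPositive_def'.2
    ⟨(IsSelfAdjoint.one _).sub (hγsa.smul hsa), fun x => ?_⟩
  have hCx : ‖(C†) x‖ ≤ γ * ‖x‖ :=
    (C†).le_of_opNorm_le ((ContinuousLinearMap.adjoint.norm_map C).trans_le hC) x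
  have hquot : (γ ^ 2)⁻¹ * ‖(C†) x‖ ^ 2 ≤ ‖x‖ ^ 2 := by
    rw [inv_mul_le_iff₀ (by positivity), ← mul_pow]
    gcongr
  have hinner : ‖(C†) x‖ ^ 2 = RCLike.re ⟪(C ∘L C†) x, x⟫_ℂ := by
    rw [ContinuousLinearMap.apply_norm_sq_eq_inner_adjoint_left,
      ContinuousLinearMap.adjoint_adjoint]
  have hform : ContinuousLinearMap.reApplyInnerSelf (1 - (((γ ^ 2)⁻¹ : ℝ) : ℂ) • C ∘L C†) x =
      ‖x‖ ^ 2 - (γ ^ 2)⁻¹ * ‖(C†) x‖ ^ 2 := by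
    rw [hinner, ContinuousLinearMap.reApplyInnerSelf_apply, _root_.sub_apply, _root_.smul_apply,
      one_apply_eq_self, inner_sub_left, inner_smul_left, map_sub, Complex.conj_ofReal,
      inner_self_eq_norm_sq]
    exact congrArg _ (Complex.re_ofReal_mul _ _)
  exact hform.symm ▸ sub_nonneg.2 hquot

theorem isPositive_comp_adjoint_sub [CompleteSpace E] [CompleteSpace F] [CompleteSpace G]
    (T : F →L[ℂ] G) {C : E →L[ℂ] F} {γ : ℝ} (hγ : 0 < γ) (hC : ‖C‖ ≤ γ) :
    (T ∘L T† - ((γ : ℂ) ^ 2)⁻¹ • (T ∘L C) ∘L (T ∘L C)†).IsPositive := by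
  convert (isPositive_one_sub_comp_adjoint hγ hC).conj_adjoint T using 1
  simp [ContinuousLinearMap.adjoint_comp, ContinuousLinearMap.comp_assoc,
    ContinuousLinearMap.one_def]

theorem inner_piLp_single_left [Fintype κ] [DecidableEq κ] (i : κ) (a : E)
    (x : PiLp 2 fun _ : κ => E) : ⟪PiLp.single 2 i a, x⟫_ℂ = ⟪a, x i⟫_ℂ := by
  rw [PiLp.inner_apply, Finset.sum_eq_single i (fun j _ hj => ?_) (by simp), PiLp.single_eq_same]
  rw [PiLp.single_eq_of_ne _ hj, inner_zero_left]

theorem orthonormal_single [Fintype κ] [DecidableEq κ] {v : ι → E} (hv : Orthonormal ℂ v) :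
    Orthonormal ℂ fun q : κ × ι => (PiLp.single 2 q.1 (v q.2) : PiLp 2 fun _ : κ => E) := by
  classical
  rw [orthonormal_iff_ite] at hv ⊢
  rintro ⟨i, a⟩ ⟨j, b⟩
  rw [inner_piLp_single_left]
  obtain rfl | hij := eq_or_ne i j
  · simp [hv]
  · simp [hij]

end Hilbert

section Toeplitz

open scoped ComplexOrder InnerProductSpace InnerProduct Matrix

/-- The exponential `e_λ` as a vector of the GNS space of the Bohr mean. -/
def besicovitchExp (k : ℕ) (lam : Fin k → ℝ) : (bohrMean k).GNS :=
  gnsVector (bohrMean k) (apExp k lam)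

/-- The Besicovitch space `B^k_Δ`: the closed span of the exponentials with frequency in `Δ`,
inside the GNS space of the Bohr mean. -/
def besicovitch (k : ℕ) (Δ : Set (Fin k → ℝ)) : Submodule ℂ (bohrMean k).GNS :=
  (Submodule.span ℂ (besicovitchExp k '' Δ)).topologicalClosure

theorem orthonormal_besicovitchExp (k : ℕ) : Orthonormal ℂ (besicovitchExp k) := by
  classical
  rw [orthonormal_iff_ite]
  intro lam mu
  rw [besicovitchExp, besicovitchExp, inner_gnsVector, star_apExp, apExp_mul, bohrMean_apExp]
  simp only [neg_add_eq_zero]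

/-- The isometry `ℓ²(Fin n × Δ) → (B^k_Δ)^{n×1}` summing a family of Bohr-Fourier coefficients. It
is taken with values in columns over the whole GNS space, on which all matrices over `APB k` act. -/
def synthesis (k n : ℕ) (Δ : Set (Fin k → ℝ)) :
    BesCol k n Δ →ₗᵢ[ℂ] PiLp 2 fun _ : Fin n => (bohrMean k).GNS :=
  (orthonormal_single (κ := Fin n) <| (orthonormal_besicovitchExp k).comp ((↑) : Δ → Fin k → ℝ)
    Subtype.val_injective).orthogonalFamily.linearIsometry

/-- The Toeplitz operator `φ ↦ Π_Δ(F φ)`, read in Bohr-Fourier coefficients: compressing by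
`synthesis` amounts to projecting onto `(B^k_Δ)^{m×1}`. -/
def toeplitz (k : ℕ) {m n : ℕ} (Δ : Set (Fin k → ℝ)) (F : Matrix (Fin m) (Fin n) (APB k)) :
    BesCol k n Δ →L[ℂ] BesCol k m Δ :=
  (synthesis k m Δ).toContinuousLinearMap† ∘L gnsMatrix (bohrMean k) F ∘L
    (synthesis k n Δ).toContinuousLinearMap

variable {k m n p : ℕ} {Δ : Set (Fin k → ℝ)} {f : APB k}

theorem inner_besicovitchExp_gnsVector (hf : f ∈ APalg k) (lam : Fin k → ℝ) :
    ⟪besicovitchExp k lam, gnsVector (bohrMean k) f⟫_ℂ = bohrCoeff k f lam := by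
  rw [besicovitchExp, inner_gnsVector, bohrCoeff_eq_bohrMean hf]

theorem APmem.gnsVector_mem (hf : APmem k Δ f) : gnsVector (bohrMean k) f ∈ besicovitch k Δ := by
  refine mem_closure_span_image_of_inner_eq_zero (orthonormal_besicovitchExp k) ?_
    fun lam hlam => ?_
  · have hmem : f ∈ (APalg k).toSubmodule := hf.1
    rw [toSubmodule_APalg] at hmem
    have hmap := Submodule.topologicalClosure_map (gnsVector (bohrMean k)) _
      (Submodule.mem_map_of_mem hmem)
    rwa [Submodule.map_span, ← Set.range_comp] at hmap
  · rw [inner_besicovitchExp_gnsVector hf.1]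
    exact by_contra fun h => hlam (hf.2 h)

theorem bohrCoeff_mul_apExp (hf : f ∈ APalg k) (mu lam : Fin k → ℝ) :
    bohrCoeff k ⇑(f * apExp k mu) lam = bohrCoeff k f (lam - mu) := by
  rw [bohrCoeff_eq_bohrMean ((APalg k).mul_mem hf (apExp_mem_APalg mu)),
    bohrCoeff_eq_bohrMean hf, star_apExp, star_apExp, mul_left_comm, apExp_mul, mul_comm f,
    neg_sub, neg_add_eq_sub]

theorem APmem.mul_apExp (hf : APmem k Δ f) (hΔ : ∀ a ∈ Δ, ∀ b ∈ Δ, a + b ∈ Δ)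
    {mu : Fin k → ℝ} (hmu : mu ∈ Δ) : APmem k Δ (f * apExp k mu) := by
  refine ⟨(APalg k).mul_mem hf.1 (apExp_mem_APalg mu), fun lam hlam => ?_⟩
  rw [bohrSpectrum, Set.mem_ofPred_eq, bohrCoeff_mul_apExp hf.1] at hlam
  simpa using hΔ _ (hf.2 hlam) _ hmu

theorem synthesis_single (j : Fin n) (mu : Δ) :
    synthesis k n Δ (lp.single 2 (j, mu) 1) = PiLp.single 2 j (besicovitchExp k mu) := by
  simp [synthesis]

theorem single_mem_range_synthesis {x : (bohrMean k).GNS} (hx : x ∈ besicovitch k Δ)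
    (j : Fin n) : PiLp.single 2 j x ∈ Set.range (synthesis k n Δ) := by
  let incl : (bohrMean k).GNS →L[ℂ] PiLp 2 fun _ : Fin n => (bohrMean k).GNS :=
    (PiLp.continuousLinearEquiv 2 ℂ fun _ : Fin n => (bohrMean k).GNS).symm ∘L
      .single ℂ (fun _ => (bohrMean k).GNS) j
  have hclosed : IsClosed (Set.range (synthesis k n Δ)) :=
    (synthesis k n Δ).isometry.isClosedEmbedding.isClosed_range
  have hle : besicovitch k Δ ≤ (synthesis k n Δ).toLinearMap.range.comap incl.toLinearMap := by
    refine Submodule.topologicalClosure_minimal _ (Submodule.span_le.2 ?_)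
      (hclosed.preimage incl.continuous)
    rintro _ ⟨mu, hmu, rfl⟩
    exact ⟨lp.single 2 (j, ⟨mu, hmu⟩) 1, synthesis_single j ⟨mu, hmu⟩⟩
  exact hle hx

theorem gnsColumn_mem_range_synthesis {y : Fin n → APB k} (hy : ∀ i, APmem k Δ (y i)) :
    gnsColumn (bohrMean k) y ∈ Set.range (synthesis k n Δ) := by
  have hsum : gnsColumn (bohrMean k) y =
      ∑ i, PiLp.single 2 i (gnsVector (bohrMean k) (y i)) := by
    ext i
    simp [gnsColumn, Pi.single_apply]
  rw [hsum]
  exact (synthesis k n Δ).toLinearMap.range.sum_mem fun i _ =>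
    single_mem_range_synthesis (hy i).gnsVector_mem i

theorem gnsMatrix_synthesis_single (F : Matrix (Fin m) (Fin n) (APB k)) (j : Fin n) (mu : Δ) :
    gnsMatrix (bohrMean k) F (synthesis k n Δ (lp.single 2 (j, mu) 1)) =
      gnsColumn (bohrMean k) fun i => F i j * apExp k mu := by
  have hcol : PiLp.single 2 j (besicovitchExp k mu) =
      gnsColumn (bohrMean k) (Pi.single j (apExp k mu)) := by
    ext i
    obtain rfl | hij := eq_or_ne i j
    · simp [gnsColumn, besicovitchExp]
    · simp [gnsColumn, hij]
  rw [synthesis_single, hcol, gnsMatrix_gnsColumn, Matrix.mulVec_single]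
  rfl

theorem besCol_ext {E : Type*} [NormedAddCommGroup E] [NormedSpace ℂ E]
    {T T' : BesCol k n Δ →L[ℂ] E}
    (h : ∀ j mu, T (lp.single 2 (j, mu) 1) = T' (lp.single 2 (j, mu) 1)) : T = T' := by
  refine lp.ext_continuousLinearMap ENNReal.ofNat_ne_top fun ⟨j, mu⟩ => ?_
  ext1
  exact h j mu

theorem gnsMatrix_comp_synthesis (hΔ : ∀ a ∈ Δ, ∀ b ∈ Δ, a + b ∈ Δ)
    {F : Matrix (Fin m) (Fin n) (APB k)} (hF : ∀ i j, APmem k Δ (F i j)) :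
    gnsMatrix (bohrMean k) F ∘L (synthesis k n Δ).toContinuousLinearMap =
      (synthesis k m Δ).toContinuousLinearMap ∘L toeplitz k Δ F := by
  refine besCol_ext fun j mu => ?_
  obtain ⟨z, hz⟩ := gnsColumn_mem_range_synthesis fun i => (hF i j).mul_apExp hΔ mu.2
  rw [← gnsMatrix_synthesis_single] at hz
  have hproj : ((synthesis k m Δ).toContinuousLinearMap†) (synthesis k m Δ z) = z :=
    DFunLike.congr_fun
      ((ContinuousLinearMap.norm_map_iff_adjoint_comp_self _).1 (synthesis k m Δ).norm_map) z
  simp only [toeplitz, ContinuousLinearMap.comp_apply, LinearIsometry.coe_toContinuousLinearMap,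
    ← hz, hproj]

theorem toeplitz_mul (hΔ : ∀ a ∈ Δ, ∀ b ∈ Δ, a + b ∈ Δ) (A : Matrix (Fin p) (Fin m) (APB k))
    {F : Matrix (Fin m) (Fin n) (APB k)} (hF : ∀ i j, APmem k Δ (F i j)) :
    toeplitz k Δ (A * F) = toeplitz k Δ A ∘L toeplitz k Δ F := by
  rw [toeplitz, gnsMatrix_mul, ContinuousLinearMap.comp_assoc, gnsMatrix_comp_synthesis hΔ hF]
  rfl

theorem star_dotProduct_self_apply (y : Fin n → APB k) (t : Fin k → ℝ) :
    (star y ⬝ᵥ y) t = ((∑ j, ‖y j t‖ ^ 2 : ℝ) : ℂ) := by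
  simp [dotProduct, Complex.conj_mul']

theorem MatrixSupOpNormLE.star_mulVec_dotProduct_le {F : Matrix (Fin m) (Fin n) (APB k)} {γ : ℝ}
    (hγ : 0 ≤ γ) (hF : MatrixSupOpNormLE k m n F γ) (y : Fin n → APB k) :
    star (F *ᵥ y) ⬝ᵥ (F *ᵥ y) ≤ γ ^ 2 • (star y ⬝ᵥ y) := fun t => by
  have hsqrt := hF t fun j => y j t
  rw [← sq_le_sq₀ (Real.sqrt_nonneg _) (by positivity), mul_pow,
    Real.sq_sqrt (by positivity), Real.sq_sqrt (by positivity)] at hsqrt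
  have hFy : ∀ i, (F *ᵥ y) i t = ∑ j, F i j t * y j t := fun i => by
    simp [Matrix.mulVec, dotProduct]
  rw [star_dotProduct_self_apply, BoundedContinuousFunction.smul_apply,
    star_dotProduct_self_apply, Complex.real_smul, ← Complex.ofReal_mul, Complex.real_le_real]
  simpa only [hFy] using hsqrt

theorem norm_toeplitz_le {F : Matrix (Fin m) (Fin n) (APB k)} {γ : ℝ} (hγ : 0 ≤ γ)
    (hF : MatrixSupOpNormLE k m n F γ) : ‖toeplitz k Δ F‖ ≤ γ := by
  refine ContinuousLinearMap.opNorm_le_bound _ hγ fun x => ?_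
  calc ‖toeplitz k Δ F x‖
      ≤ 1 * ‖gnsMatrix (bohrMean k) F (synthesis k n Δ x)‖ :=
        ContinuousLinearMap.le_of_opNorm_le _
          ((ContinuousLinearMap.adjoint.norm_map _).trans_le
            (synthesis k m Δ).norm_toContinuousLinearMap_le) _
    _ ≤ γ * ‖synthesis k n Δ x‖ := by
        rw [one_mul]
        exact ContinuousLinearMap.le_of_opNorm_le _
          (norm_gnsMatrix_le _ hγ (hF.star_mulVec_dotProduct_le hγ)) _
    _ = γ * ‖x‖ := by rw [LinearIsometry.norm_map]

theorem inner_single_toeplitz_single {F : Matrix (Fin m) (Fin n) (APB k)}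
    (hF : ∀ i j, F i j ∈ APalg k) (i : Fin m) (j : Fin n) (nu mu : Δ) :
    ⟪lp.single 2 (i, nu) 1, toeplitz k Δ F (lp.single 2 (j, mu) 1)⟫_ℂ =
      bohrCoeff k (F i j) (nu - mu) := by
  rw [toeplitz, ContinuousLinearMap.comp_apply, ContinuousLinearMap.adjoint_inner_right]
  simp only [ContinuousLinearMap.comp_apply, LinearIsometry.coe_toContinuousLinearMap]
  rw [gnsMatrix_synthesis_single, synthesis_single, inner_piLp_single_left, gnsColumn,
    inner_besicovitchExp_gnsVector ((APalg k).mul_mem (hF i j) (apExp_mem_APalg _)),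
    bohrCoeff_mul_apExp (hF i j)]

theorem RepresentsToeplitz.eq_toeplitz {S Λ : Set (Fin k → ℝ)}
    {F : Matrix (Fin m) (Fin n) (APB k)} {T : BesCol k n (S ∩ Λ) →L[ℂ] BesCol k m (S ∩ Λ)}
    (hT : RepresentsToeplitz k S Λ m n F T) (hF : ∀ i j, F i j ∈ APalg k) :
    T = toeplitz k (S ∩ Λ) F := by
  refine besCol_ext fun j mu => lp.ext <| funext fun ⟨i, nu⟩ => ?_
  have hentry := (hT j mu i nu).trans (inner_single_toeplitz_single hF i j nu mu).symm
  simpa only [lp.inner_single_left, RCLike.inner_apply, map_one, mul_one] using hentry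

end Toeplitz

theorem toeplitz_corona_necessity_general {k p m n : ℕ} {S Λ : Set (Fin k → ℝ)}
    (hadd : ∀ a ∈ S ∩ Λ, ∀ b ∈ S ∩ Λ, a + b ∈ S ∩ Λ)
    {A : Matrix (Fin p) (Fin m) (APB k)} (hA : ∀ i j, A i j ∈ APalg k)
    {F : Matrix (Fin m) (Fin n) (APB k)} (hF : ∀ i j, APmem k (S ∩ Λ) (F i j))
    {γ : ℝ} (hγ : 0 < γ) (hFγ : MatrixSupOpNormLE k m n F γ)
    {TA : BesCol k m (S ∩ Λ) →L[ℂ] BesCol k p (S ∩ Λ)}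
    {TB : BesCol k n (S ∩ Λ) →L[ℂ] BesCol k p (S ∩ Λ)}
    (hTA : RepresentsToeplitz k S Λ p m A TA)
    (hTB : RepresentsToeplitz k S Λ p n (A * F) TB) :
    (TA.comp (ContinuousLinearMap.adjoint TA) -
      ((γ : ℂ) ^ 2)⁻¹ • TB.comp (ContinuousLinearMap.adjoint TB)).IsPositive := by
  have hAF : ∀ i j, (A * F) i j ∈ APalg k := fun i j => by
    rw [Matrix.mul_apply]
    exact (APalg k).sum_mem fun l _ => (APalg k).mul_mem (hA i l) (hF l j).1
  rw [hTA.eq_toeplitz hA, hTB.eq_toeplitz hAF, toeplitz_mul hadd A hF]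
  exact isPositive_comp_adjoint_sub _ hγ (norm_toeplitz_le hγ.le hFγ)

/-- **Theorem 5.1, necessity part.**  Let `S ⊂ ℝ^k` be a halfspace,
`A ∈ (APW^k_S)^{p×m}`, `B ∈ (APW^k_S)^{p×p}` invertible in `(APW^k)^{p×p}`,
`γ > 0`, `A` and `B` left coprime over `APW^k_S`, and `Λ'` an additive
subgroup of `ℝ^k` containing `σ(A) ∪ σ(B)`.  If there is an
`F ∈ (APW^k_{S∩Λ'})^{m×p}` with `sup_t ‖F(t)‖ ≤ γ` and `A F = B`, then
`T(A) T(A)* ≥ γ⁻² T(B) T(B)*`. -/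
theorem toeplitz_corona_necessity (k p m : ℕ)
    (S : Set (Fin k → ℝ)) (hS : IsHalfspace k S)
    (A : Matrix (Fin p) (Fin m) (APB k)) (hA : ∀ i j, APWmem k S (A i j))
    (B : Matrix (Fin p) (Fin p) (APB k)) (hB : ∀ i j, APWmem k S (B i j))
    (hBinv : ∃ Binv : Matrix (Fin p) (Fin p) (APB k),
      (∀ i j, APWmem k Set.univ (Binv i j)) ∧ B * Binv = 1 ∧ Binv * B = 1)
    (γ : ℝ) (hγ : 0 < γ)
    (hcoprime : ∃ (Y₁ : Matrix (Fin m) (Fin p) (APB k))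
        (Y₂ : Matrix (Fin p) (Fin p) (APB k)),
      (∀ i j, APWmem k S (Y₁ i j)) ∧ (∀ i j, APWmem k S (Y₂ i j)) ∧
      A * Y₁ + B * Y₂ = 1)
    (Lam : AddSubgroup (Fin k → ℝ))
    (hLamA : ∀ i j, bohrSpectrum k (⇑(A i j)) ⊆ ↑Lam)
    (hLamB : ∀ i j, bohrSpectrum k (⇑(B i j)) ⊆ ↑Lam)
    (hF : ∃ F : Matrix (Fin m) (Fin p) (APB k),
      (∀ i j, APWmem k (S ∩ ↑Lam) (F i j)) ∧
      MatrixSupOpNormLE k m p F γ ∧ A * F = B) :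
    ∀ (TA : BesCol k m (S ∩ ↑Lam) →L[ℂ] BesCol k p (S ∩ ↑Lam))
      (TB : BesCol k p (S ∩ ↑Lam) →L[ℂ] BesCol k p (S ∩ ↑Lam)),
      RepresentsToeplitz k S (↑Lam) p m A TA →
      RepresentsToeplitz k S (↑Lam) p p B TB →
      (TA.comp (ContinuousLinearMap.adjoint TA) -
        ((γ : ℂ) ^ 2)⁻¹ • TB.comp (ContinuousLinearMap.adjoint TB)).IsPositive := by
  obtain ⟨F, hF, hFγ, rfl⟩ := hF
  exact fun TA TB hTA hTB => toeplitz_corona_necessity_general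
    (fun a ha b hb => ⟨hS.add_mem a ha.1 b hb.1, Lam.add_mem ha.2 hb.2⟩)
    (fun i j => (hA i j).1.1) (fun i j => (hF i j).1) hγ hFγ hTA hTB
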